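/- arXiv:2504.16602 — 3 statements merged into one kernel-verified Lean document; each statement's English description precedes it below -/
import Mathlib

section
/- Let k be a field of characteristic p > 0, let (H_n)_{n ∈ ℕ} be a family of groups, and let G = *_{n ∈ ℕ} H_n be their free product (coproduct of groups). For each n, let Ind_n = kG ⊗_{kH_n} k denote the kG-module induced from the trivial kH_n-module k along the canonical inclusion H_n → G. Then there is a short exact sequence of kG-modules 0 → P → ⊕_{n ∈ ℕ} Ind_n → k → 0, where the map ⊕_{n} Ind_n → k is given on each summand by the augmentation g ⊗ 1 ↦ 1 and where P is a projective kG-module. -/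
open TensorProduct DirectSum

noncomputable section

universe u

variable (k : Type u) [Field k] (H : ℕ → Type u) [∀ n, Group (H n)]

/-- The group algebra `kG` of the free product `G = *_{n ∈ ℕ} H_n`. -/
abbrev FreeProdAlg : Type u := MonoidAlgebra k (Monoid.CoprodI H)

/-- The ring homomorphism `kH_n →+* kG` induced by the canonical inclusion `H_n → G`. -/
def inclHom (n : ℕ) : MonoidAlgebra k (H n) →+* FreeProdAlg k H :=
  MonoidAlgebra.mapDomainRingHom k (Monoid.CoprodI.of (i := n))

/-- The trivial `kH_n`-module `k`. -/
abbrev TrivMod (n : ℕ) : Type u := (Representation.trivial k (G := H n) (V := k)).asModule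

/-- The `kG`-submodule of `kG ⊗_k k` of relations defining the balanced tensor product
`kG ⊗_{kH_n} k`. -/
def indRel (n : ℕ) : Submodule (FreeProdAlg k H) (FreeProdAlg k H ⊗[k] TrivMod k H n) :=
  Submodule.span (FreeProdAlg k H)
    { x | ∃ (a : FreeProdAlg k H) (b : MonoidAlgebra k (H n)) (v : TrivMod k H n),
        x = (a * inclHom k H n b) ⊗ₜ[k] v - a ⊗ₜ[k] (b • v) }

/-- The induced module `Ind_n = kG ⊗_{kH_n} k`, the extension of scalars along
`kH_n → kG` of the trivial `kH_n`-module `k`, realised as the balanced tensor product. -/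
abbrev Ind (n : ℕ) : Type u := (FreeProdAlg k H ⊗[k] TrivMod k H n) ⧸ indRel k H n

/-- The element `g ⊗ 1` of `Ind_n = kG ⊗_{kH_n} k`. -/
def indGen (n : ℕ) (g : Monoid.CoprodI H) : Ind k H n :=
  Submodule.Quotient.mk
    ((MonoidAlgebra.of k (Monoid.CoprodI H) g) ⊗ₜ[k]
      ((Representation.trivial k (G := H n) (V := k)).asModuleEquiv.symm 1))

/-- The trivial `kG`-module `k`. -/
abbrev TrivModG : Type u := (Representation.trivial k (G := Monoid.CoprodI H) (V := k)).asModule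

section Aux

open Monoid MonoidAlgebra

local instance instACG : AddCommGroup (⨁ n, Ind k H n) :=
  Module.addCommMonoidToAddCommGroup (FreeProdAlg k H)

local instance instMM : Module (FreeProdAlg k H) (⨁ n, Ind k H n) := DirectSum.instModule

/-- The free module. -/
abbrev FM : Type u := ℕ →₀ FreeProdAlg k H

/-- The group element in the algebra. -/
abbrev tt (g : CoprodI H) : FreeProdAlg k H := MonoidAlgebra.of k (CoprodI H) g

/-- The vectors `f_n`, with `f_0 = 0`. -/
def ff : ℕ → FM k H
  | 0 => 0
  | n + 1 => Finsupp.single n 1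

/-- Affine action of `H_n`. -/
def affH (n : ℕ) : H n →* Function.End (FM k H) where
  toFun h := fun x => tt k H (CoprodI.of h) • (x + ff k H n) - ff k H n
  map_one' := by
    funext x
    change _ = x
    simp only [tt, map_one, one_smul, add_sub_cancel_right]
  map_mul' a b := by
    funext x
    change _ = tt k H (CoprodI.of a) •
      ((tt k H (CoprodI.of b) • (x + ff k H n) - ff k H n) + ff k H n) - ff k H n
    simp only [tt, map_mul, mul_smul, sub_add_cancel]

/-- Affine action of `G`. -/
def aff : CoprodI H →* Function.End (FM k H) := CoprodI.lift (affH k H)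

lemma aff_one (x : FM k H) : aff k H 1 x = x := by rw [map_one]; rfl

lemma aff_mul (a b : CoprodI H) (x : FM k H) : aff k H (a * b) x = aff k H a (aff k H b x) := by
  rw [map_mul]; rfl

lemma aff_of (n : ℕ) (h : H n) (x : FM k H) : aff k H (CoprodI.of h) x =
    tt k H (CoprodI.of h) • (x + ff k H n) - ff k H n := by
  rw [aff, CoprodI.lift_of]; rfl

/-- The crossed homomorphism. -/
def DD (g : CoprodI H) : FM k H := aff k H g 0

lemma aff_eq (g : CoprodI H) : ∀ x, aff k H g x = tt k H g • x + DD k H g := by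
  unfold DD
  induction g using CoprodI.induction_on with
  | one => intro x; rw [aff_one, aff_one, tt, map_one, one_smul, add_zero]
  | of i m => intro x; rw [aff_of, aff_of, zero_add, smul_add]; abel
  | mul a b ha hb =>
    intro x
    rw [aff_mul, aff_mul, tt, map_mul, mul_smul, ha, hb, ha (aff k H b 0), smul_add, add_assoc]

lemma DD_one : DD k H 1 = 0 := by rw [DD, aff_one]

lemma DD_mul (a b : CoprodI H) : DD k H (a * b) = tt k H a • DD k H b + DD k H a := by
  rw [← aff_eq, DD, DD, aff_mul]

lemma DD_of (n : ℕ) (h : H n) :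
    DD k H (CoprodI.of h) = tt k H (CoprodI.of h) • ff k H n - ff k H n := by
  rw [DD, aff_of, zero_add]

/-- `g ↦ g f_n - D g`, linearly extended. -/
def SS (n : ℕ) : FreeProdAlg k H →ₗ[k] FM k H :=
  (Finsupp.lsum k (fun g => LinearMap.toSpanSingleton k (FM k H)
    (tt k H g • ff k H n - DD k H g))) ∘ₗ (MonoidAlgebra.coeffLinearEquiv k).toLinearMap

lemma SS_single (n : ℕ) (g : CoprodI H) (c : k) :
    SS k H n (MonoidAlgebra.single g c) = c • (tt k H g • ff k H n - DD k H g) := by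
  simp [SS]

abbrev vv (n : ℕ) (c : k) : TrivMod k H n :=
  (Representation.trivial k (G := H n) (V := k)).asModuleEquiv.symm c

/-- the map on the tensor product -/
def S0 (n : ℕ) : FreeProdAlg k H ⊗[k] TrivMod k H n →ₗ[k] FM k H :=
  TensorProduct.lift (LinearMap.flip
    ((LinearMap.toSpanSingleton k (FreeProdAlg k H →ₗ[k] FM k H) (SS k H n)) ∘ₗ
     (Representation.trivial k (G := H n) (V := k)).asModuleEquiv.toLinearMap))

lemma S0_tmul (n : ℕ) (a : FreeProdAlg k H) (c : k) :
    S0 k H n (a ⊗ₜ[k] vv k H n c) = c • SS k H n a := by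
  simp [S0]

lemma rel_single (n : ℕ) (h : H n) (d c : k) :
    (MonoidAlgebra.single h d : MonoidAlgebra k (H n)) • vv k H n c = vv k H n (d * c) := by
  simp; rfl

lemma SS_incl (n : ℕ) (a : FreeProdAlg k H) (h : H n) (d : k) :
    SS k H n (a * inclHom k H n (MonoidAlgebra.single h d)) = d • SS k H n a := by
  induction a using MonoidAlgebra.induction_linear with
  | zero => simp
  | add x y hx hy => simp [add_mul, hx, hy]
  | single g e =>
    have : inclHom k H n (MonoidAlgebra.single h d) = MonoidAlgebra.single (CoprodI.of h) d := by
      simp [inclHom]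
    rw [this, MonoidAlgebra.single_mul_single, SS_single, SS_single, DD_mul, DD_of, smul_smul,
      mul_comm]
    congr 1
    simp only [tt, map_mul, mul_smul, smul_sub]
    abel

lemma S0_rel (n : ℕ) (a : FreeProdAlg k H) (b : MonoidAlgebra k (H n)) (v : TrivMod k H n) :
    S0 k H n ((a * inclHom k H n b) ⊗ₜ[k] v - a ⊗ₜ[k] (b • v)) = 0 := by
  obtain ⟨c, rfl⟩ := (Representation.trivial k (G := H n) (V := k)).asModuleEquiv.symm.surjective v
  induction b using MonoidAlgebra.induction_linear with
  | zero => simp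
  | add x y hx hy =>
    rw [map_sub, sub_eq_zero] at hx hy ⊢
    rw [map_add, mul_add, TensorProduct.add_tmul, map_add, hx, hy, add_smul,
      TensorProduct.tmul_add, map_add]
  | single h d =>
    rw [rel_single, map_sub, S0_tmul, S0_tmul, SS_incl, smul_smul, mul_comm, sub_self]

lemma S0_indRel (n : ℕ) (x : FreeProdAlg k H ⊗[k] TrivMod k H n) (hx : x ∈ indRel k H n) :
    S0 k H n x = 0 := by
  suffices h : ∀ c : FreeProdAlg k H, S0 k H n (c • x) = 0 by simpa using h 1
  induction hx using Submodule.span_induction with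
  | mem x h =>
    obtain ⟨a, b, v, rfl⟩ := h
    intro c
    rw [smul_sub, TensorProduct.smul_tmul', TensorProduct.smul_tmul', smul_eq_mul, smul_eq_mul,
      ← mul_assoc]
    exact S0_rel ..
  | zero => simp
  | add x y _ _ hx hy => intro c; rw [smul_add, map_add, hx, hy, add_zero]
  | smul a x _ hx => intro c; rw [smul_smul]; exact hx _

/-- the map on `Ind`. -/
def S1 (n : ℕ) : Ind k H n →+ FM k H :=
  QuotientAddGroup.lift (indRel k H n).toAddSubgroup (S0 k H n).toAddMonoidHom
    (fun x hx => S0_indRel k H n x hx)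

lemma S1_mk (n : ℕ) (x : FreeProdAlg k H ⊗[k] TrivMod k H n) :
    S1 k H n (Submodule.Quotient.mk x) = S0 k H n x := rfl

/-- total splitting -/
def S2 : (⨁ n, Ind k H n) →+ FM k H := DirectSum.toAddMonoid (S1 k H)

/-- The generator of `Ind_n` in the direct sum. -/
def ee (n : ℕ) : ⨁ n, Ind k H n := DirectSum.lof (FreeProdAlg k H) ℕ (Ind k H) n (indGen k H n 1)

lemma smul_ee (n : ℕ) (a : FreeProdAlg k H) :
    a • ee k H n = DirectSum.of (Ind k H) n (Submodule.Quotient.mk (a ⊗ₜ[k] vv k H n 1)) := by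
  rw [ee, ← map_smul, indGen, ← Submodule.Quotient.mk_smul, TensorProduct.smul_tmul', map_one, smul_eq_mul, mul_one]
  rfl

lemma S2_ee (n : ℕ) (a : FreeProdAlg k H) : S2 k H (a • ee k H n) = SS k H n a := by
  rw [smul_ee, S2, DirectSum.toAddMonoid_of, S1_mk, S0_tmul, one_smul]

/-- The map from the free module. -/
def io : FM k H →ₗ[FreeProdAlg k H] ⨁ n, Ind k H n :=
  Finsupp.linearCombination _ (fun n => ee k H (n + 1) - ee k H 0)

lemma io_ff (n : ℕ) : io k H (ff k H n) = ee k H n - ee k H 0 := by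
  cases n <;> simp [io, ff]

lemma SS_sub (n : ℕ) (a : FreeProdAlg k H) :
    SS k H (n + 1) a - SS k H 0 a = Finsupp.single n a := by
  induction a using MonoidAlgebra.induction_linear with
  | zero => simp
  | add x y hx hy => rw [Finsupp.single_add, ← hx, ← hy, map_add, map_add]; abel
  | single g e => 
    rw [SS_single, SS_single, ← smul_sub, sub_sub_sub_cancel_right]
    simp [ff]

lemma S2_io (x : FM k H) : S2 k H (io k H x) = x := by
  induction x using Finsupp.induction_linear with
  | zero => simp
  | add x y hx hy => rw [map_add, map_add, hx, hy]
  | single n a => rw [io, Finsupp.linearCombination_single, smul_sub, map_sub, S2_ee, S2_ee, SS_sub]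

lemma tt_ee (n : ℕ) (h : H n) : tt k H (CoprodI.of h) • ee k H n = ee k H n := by
  rw [smul_ee, ← one_smul (FreeProdAlg k H) (ee k H n), smul_ee]
  congr 1
  rw [Submodule.Quotient.eq]
  refine Submodule.subset_span ⟨1, MonoidAlgebra.single h 1, vv k H n 1, ?_⟩
  rw [rel_single]
  simp [inclHom]

lemma io_DD (g : CoprodI H) : io k H (DD k H g) = ee k H 0 - tt k H g • ee k H 0 := by
  induction g using CoprodI.induction_on with
  | one => rw [DD_one, map_zero, tt, map_one, one_smul, sub_self]
  | of i m => rw [DD_of, map_sub, map_smul, io_ff, smul_sub, tt_ee]; abel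
  | mul a b ha hb =>
    have hab : tt k H (a * b) = tt k H a * tt k H b := map_mul _ _ _
    rw [DD_mul, map_add, map_smul, ha, hb, hab, mul_smul, smul_sub]; abel

/-- Augmentation on the tensor product. -/
def pi0 (n : ℕ) : FreeProdAlg k H ⊗[k] TrivMod k H n →ₗ[FreeProdAlg k H] TrivModG k H :=
  TensorProduct.AlgebraTensorModule.lift (LinearMap.toSpanSingleton (FreeProdAlg k H) _
    ((Representation.trivial k (G := CoprodI H) (V := k)).asModuleEquiv.symm.toLinearMap ∘ₗ
    (Representation.trivial k (G := H n) (V := k)).asModuleEquiv.toLinearMap))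

abbrev vG (c : k) : TrivModG k H :=
  (Representation.trivial k (G := CoprodI H) (V := k)).asModuleEquiv.symm c

lemma single_vG (g : CoprodI H) (d c : k) :
    (MonoidAlgebra.single g d : FreeProdAlg k H) • vG k H c = vG k H (d * c) := by
  simp; rfl

lemma pi0_tmul (n : ℕ) (a : FreeProdAlg k H) (c : k) :
    pi0 k H n (a ⊗ₜ[k] vv k H n c) = a • vG k H c := by
  simp [pi0]

lemma pi0_rel (n : ℕ) (a : FreeProdAlg k H) (b : MonoidAlgebra k (H n)) (v : TrivMod k H n) :
    pi0 k H n ((a * inclHom k H n b) ⊗ₜ[k] v - a ⊗ₜ[k] (b • v)) = 0 := by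
  obtain ⟨c, rfl⟩ := (Representation.trivial k (G := H n) (V := k)).asModuleEquiv.symm.surjective v
  induction b using MonoidAlgebra.induction_linear with
  | zero => simp
  | add x y hx hy =>
    rw [map_sub, sub_eq_zero] at hx hy ⊢
    rw [map_add, mul_add, TensorProduct.add_tmul, map_add, hx, hy, add_smul,
      TensorProduct.tmul_add, map_add]
  | single h d =>
    have : inclHom k H n (MonoidAlgebra.single h d) = MonoidAlgebra.single (CoprodI.of h) d := by
      simp [inclHom]
    rw [rel_single, map_sub, pi0_tmul, pi0_tmul, this, mul_smul, single_vG, sub_self]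

/-- Augmentation on `Ind_n`. -/
def pi1 (n : ℕ) : Ind k H n →ₗ[FreeProdAlg k H] TrivModG k H :=
  Submodule.liftQ (indRel k H n) (pi0 k H n) (by
    rw [indRel, Submodule.span_le]
    rintro x ⟨a, b, v, rfl⟩
    exact pi0_rel ..)

/-- Augmentation. -/
def pi2 : (⨁ n, Ind k H n) →ₗ[FreeProdAlg k H] TrivModG k H :=
  DirectSum.toModule _ _ _ (pi1 k H)

lemma pi2_ee (n : ℕ) : pi2 k H (ee k H n) = vG k H 1 := by
  rw [pi2, ee, DirectSum.toModule_lof, indGen, pi1, Submodule.liftQ_apply, pi0_tmul, map_one, one_smul]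

lemma pi2_io (x : FM k H) : pi2 k H (io k H x) = 0 := by
  induction x using Finsupp.induction_linear with
  | zero => simp
  | add x y hx hy => rw [map_add, map_add, hx, hy, add_zero]
  | single n a =>
    rw [io, Finsupp.linearCombination_single, map_smul, map_sub, pi2_ee, pi2_ee, sub_self,
      smul_zero]

/-- Additive section of the augmentation. -/
def E0 : TrivModG k H →+ ⨁ n, Ind k H n where
  toFun v := (MonoidAlgebra.single 1
    ((Representation.trivial k (G := CoprodI H) (V := k)).asModuleEquiv v) :
      FreeProdAlg k H) • ee k H 0
  map_zero' := by simp
  map_add' x y := by rw [map_add, MonoidAlgebra.single_add, add_smul]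

lemma E0_vG (c : k) : E0 k H (vG k H c) =
    (MonoidAlgebra.single 1 c : FreeProdAlg k H) • ee k H 0 := rfl

lemma ind_induction {P : (⨁ n, Ind k H n) → Prop} (h0 : P 0)
    (hadd : ∀ x y, P x → P y → P (x + y))
    (h : ∀ n g c, P ((MonoidAlgebra.single g c : FreeProdAlg k H) • ee k H n)) (x) : P x := by
  induction x using DirectSum.induction_on with
  | zero => exact h0
  | add x y hx hy => exact hadd x y hx hy
  | of n x =>
    obtain ⟨x, rfl⟩ := Submodule.Quotient.mk_surjective _ x
    induction x using TensorProduct.induction_on with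
    | zero => rw [Submodule.Quotient.mk_zero, map_zero]; exact h0
    | add x y hx hy => rw [Submodule.Quotient.mk_add, map_add]; exact hadd _ _ hx hy
    | tmul a v =>
      obtain ⟨c, rfl⟩ :=
        (Representation.trivial k (G := H n) (V := k)).asModuleEquiv.symm.surjective v
      have hc : a ⊗ₜ[k] vv k H n c = (c • a) ⊗ₜ[k] vv k H n 1 := by
        rw [TensorProduct.smul_tmul, ← map_smul, smul_eq_mul, mul_one]
      change P (DirectSum.of (Ind k H) n (Submodule.Quotient.mk (a ⊗ₜ[k] vv k H n c)))
      rw [hc, ← smul_ee]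
      generalize c • a = a
      induction a using MonoidAlgebra.induction_linear with
      | zero => rw [zero_smul]; exact h0
      | add x y hx hy => rw [add_smul]; exact hadd _ _ hx hy
      | single g e => exact h n g e

lemma single_eq (g : CoprodI H) (c : k) : (MonoidAlgebra.single g c : FreeProdAlg k H) =
    MonoidAlgebra.single 1 c * tt k H g := by
  simp [tt]

lemma k_smul (c : k) (x : FM k H) :
    c • x = (MonoidAlgebra.single 1 c : FreeProdAlg k H) • x := by
  rw [← one_smul (FreeProdAlg k H) x, ← smul_assoc, smul_smul]
  congr 1
  simp [MonoidAlgebra.one_def]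

lemma decomp (x : ⨁ n, Ind k H n) : x = io k H (S2 k H x) + E0 k H (pi2 k H x) := by
  induction x using ind_induction with
  | h0 => rw [map_zero, map_zero, map_zero, map_zero, add_zero]
  | hadd x y hx hy =>
    rw [map_add, map_add, map_add, map_add, add_add_add_comm, ← hx, ← hy]
  | h n g c =>
    rw [S2_ee, map_smul, pi2_ee, single_vG, E0_vG, SS_single, k_smul, map_smul, map_sub, io_DD,
      map_smul, io_ff, single_eq, mul_smul, mul_one, ← smul_add]
    congr 1
    rw [smul_sub]
    abel

/-- The kernel is free. -/
def kerEquiv : FM k H ≃ₗ[FreeProdAlg k H] LinearMap.ker (pi2 k H) :=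
  LinearEquiv.ofBijective ((io k H).codRestrict _ (fun x => pi2_io k H x)) (by
    constructor
    · intro x y hxy
      have := congrArg (fun z => S2 k H z.1) hxy
      change S2 k H (io k H x) = S2 k H (io k H y) at this
      rwa [S2_io, S2_io] at this
    · rintro ⟨x, hx⟩
      refine ⟨S2 k H x, Subtype.ext ?_⟩
      have := decomp k H x
      rw [LinearMap.mem_ker.1 hx, map_zero, add_zero] at this
      exact this.symm)

end Aux

/-- Let `k` be a field of characteristic `p > 0`, `(H_n)` a family of groups and
`G = *_{n ∈ ℕ} H_n` their free product.  Then there is a short exact sequence of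
`kG`-modules `0 → P → ⊕_n Ind_n → k → 0`, where the map `⊕_n Ind_n → k` is given on each
summand by the augmentation `g ⊗ 1 ↦ 1` and `P` (its kernel) is a projective `kG`-module. -/
theorem exists_augmentation_surjective_projective_kernel
    (p : ℕ) (hp : 0 < p) [CharP k p] :
    ∃ π : (⨁ n, Ind k H n) →ₗ[FreeProdAlg k H] TrivModG k H,
      (∀ (n : ℕ) (g : Monoid.CoprodI H),
        π (DirectSum.of (fun n => Ind k H n) n (indGen k H n g)) =
          (Representation.trivial k (G := Monoid.CoprodI H) (V := k)).asModuleEquiv.symm 1) ∧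
      Function.Surjective π ∧
      Module.Projective (FreeProdAlg k H) (LinearMap.ker π) := by
  refine ⟨pi2 k H, ?_, ?_, Module.Projective.of_equiv (kerEquiv k H)⟩
  · intro n g
    change pi2 k H (DirectSum.of (Ind k H) n
      (Submodule.Quotient.mk (tt k H g ⊗ₜ[k] vv k H n 1))) = vG k H 1
    rw [← smul_ee, map_smul, pi2_ee, tt, MonoidAlgebra.of_apply, single_vG, one_mul]
  · intro v
    obtain ⟨c, rfl⟩ :=
      (Representation.trivial k (G := Monoid.CoprodI H) (V := k)).asModuleEquiv.symm.surjective v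
    refine ⟨(MonoidAlgebra.single 1 c : FreeProdAlg k H) • ee k H 0, ?_⟩
    rw [map_smul, pi2_ee, single_vG, mul_one]
end
end

section
/- Let k be a field of characteristic p > 0, let (H_n)_{n ∈ ℕ} be a family of groups, and let G = *_{n ∈ ℕ} H_n be their free product. For each n, let Ind_n = kG ⊗_{kH_n} k denote the kG-module induced from the trivial kH_n-module k. Then: (1) for m ≠ n, the restriction of Ind_n to a kH_m-module (along the canonical inclusion H_m → G) is a free kH_m-module; and (2) the restriction of Ind_n to a kH_n-module is isomorphic to the direct sum of a copy of the trivial module k and a free kH_n-module (possibly zero). -/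
open TensorProduct DirectSum

noncomputable section

universe u

variable (k : Type u) [Field k] (H : ℕ → Type u) [∀ n, Group (H n)]

/-- The induced module `Ind_n`, viewed as a `kH_m`-module by restriction of scalars along
the ring homomorphism `kH_m → kG`. -/
def ResInd (m n : ℕ) : Type u := Ind k H n

instance (m n : ℕ) : AddCommGroup (ResInd k H m n) :=
  inferInstanceAs (AddCommGroup (Ind k H n))

instance (m n : ℕ) : Module (MonoidAlgebra k (H m)) (ResInd k H m n) :=
  Module.compHom (Ind k H n) (inclHom k H m)

open Monoid.CoprodI in
/-- Strip a possible last letter belonging to the factor `n` from a reduced word. -/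
theorem word_strip_last (m n : ℕ) (w : Word H) (hw : w.fstIdx ≠ some m) :
    ∃ (w' : Word H) (b : H n), w.prod = w'.prod * of b ∧ w'.fstIdx ≠ some m ∧
      ∀ l ∈ w'.toList.getLast?, l.1 ≠ n := by
  rcases List.eq_nil_or_concat w.toList with h | ⟨l, ⟨j, b⟩, h⟩
  · exact ⟨w, 1, by simp, hw, by simp [h]⟩
  · by_cases hj : j = n
    · subst hj
      have hch := w.chain_ne
      rw [h] at hch
      rw [List.concat_eq_append, List.isChain_append] at hch
      refine ⟨⟨l, fun x hx => w.ne_one x (by rw [h]; simp [hx]), hch.1⟩, b, ?_, ?_, ?_⟩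
      · simp [Word.prod, h]
      · rw [Word.fstIdx_ne_iff] at hw ⊢
        intro x hx
        apply hw x
        rw [h]
        cases l <;> simp_all
      · intro x hx
        exact hch.2.2 x hx ⟨j, b⟩ (by simp)
    · refine ⟨w, 1, by simp, hw, ?_⟩
      rw [h]
      simp [hj]

open Monoid.CoprodI in
theorem stab_aux (m n : ℕ) (h : H m) (h' : H n) (hne : h ≠ 1) (g : Monoid.CoprodI H)
    (hg : of h * g = g * of h') : m = n ∧ g ∈ (of : H n →* Monoid.CoprodI H).range := by
  classical
  set p := Word.equivPair m (Word.equiv g) with hp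
  have hgp : g = of p.head * p.tail.prod := by
    rw [← Word.prod_rcons, ← Word.equivPair_symm, hp, Equiv.symm_apply_apply]
    exact (Word.equiv.symm_apply_apply g).symm
  obtain ⟨w, b, hw, hwf, hwl⟩ := word_strip_last H m n p.tail p.fstIdx_ne
  generalize p.head = a at hgp
  rw [hw] at hgp
  have key : of (a⁻¹ * h * a) * w.prod = w.prod * of (b * h' * b⁻¹) := by
    have : of a * (of (a⁻¹ * h * a) * w.prod) * of b =
        of a * (w.prod * of (b * h' * b⁻¹)) * (of b : Monoid.CoprodI H) := by
      rw [hgp] at hg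
      simpa [mul_assoc] using hg
    exact mul_left_cancel (mul_right_cancel this)
  have h1ne : a⁻¹ * h * a ≠ 1 := by
    intro h0
    apply hne
    have : h = a * (a⁻¹ * h * a) * a⁻¹ := by group
    rw [this, h0]; simp
  generalize a⁻¹ * h * a = h1 at key h1ne
  generalize b * h' * b⁻¹ = h2 at key
  have h2ne : h2 ≠ 1 := by
    rintro rfl
    have : (of h1 : Monoid.CoprodI H) = 1 := by simpa using key
    exact h1ne (of_injective m (by simpa using this))
  let w1 : Word H := Word.cons h1 w hwf h1ne
  let w2 : Word H :=
    { toList := w.toList ++ [⟨n, h2⟩]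
      ne_one := by
        intro l hl
        rcases List.mem_append.mp hl with hl | hl
        · exact w.ne_one l hl
        · rw [List.mem_singleton] at hl
          subst hl
          exact h2ne
      chain_ne := by
        rw [List.isChain_append]
        refine ⟨w.chain_ne, by simp, ?_⟩
        intro x hx y hy
        have hy' : y = ⟨n, h2⟩ := by simpa using hy.symm
        subst hy'
        exact hwl x hx }
  have h12 : w1 = w2 := by
    apply Word.equiv.symm.injective
    change w1.prod = w2.prod
    rw [Word.prod_cons, key]
    simp [Word.prod, w2]
  have hl : (⟨m, h1⟩ : Σ i, H i) :: w.toList = w.toList ++ [⟨n, h2⟩] :=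
    congrArg Word.toList h12
  cases hwt : w.toList with
  | nil =>
    rw [hwt] at hl
    have hmn : m = n := by
      simp only [List.nil_append, List.cons.injEq] at hl
      exact congrArg Sigma.fst hl.1
    subst hmn
    refine ⟨rfl, a * b, ?_⟩
    rw [hgp]
    simp [Word.prod, hwt]
  | cons x t =>
    exfalso
    rw [hwt] at hl
    simp only [List.cons_append, List.cons.injEq] at hl
    rw [Word.fstIdx_ne_iff] at hwf
    exact hwf x (by simp [hwt]) (congrArg Sigma.fst hl.1)
theorem equivOfBases {k : Type*} [Field k] {H M Z X X' : Type*} [Group H]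
    [AddCommGroup M] [Module k M] [Module (MonoidAlgebra k H) M]
    [IsScalarTower k (MonoidAlgebra k H) M]
    [AddCommGroup Z] [Module k Z] [Module (MonoidAlgebra k H) Z]
    [IsScalarTower k (MonoidAlgebra k H) Z]
    (b : Module.Basis X k M) (b' : Module.Basis X' k Z) (e : X ≃ X') (s : H → X → X)
    (hs : ∀ h x, MonoidAlgebra.single h (1 : k) • b x = b (s h x))
    (hs' : ∀ h x, MonoidAlgebra.single h (1 : k) • b' (e x) = b' (e (s h x))) :
    Nonempty (M ≃ₗ[MonoidAlgebra k H] Z) := by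
  let f : M ≃ₗ[k] Z := b.equiv b' e
  have hf : ∀ (h : H) (v : M), f.toLinearMap (MonoidAlgebra.single h (1 : k) • v) =
      MonoidAlgebra.single h (1 : k) • f.toLinearMap v := by
    intro h v
    have : f.toLinearMap ∘ₗ Module.toModuleEnd k (S := MonoidAlgebra k H) M (MonoidAlgebra.single h 1) =
        Module.toModuleEnd k (S := MonoidAlgebra k H) Z (MonoidAlgebra.single h 1) ∘ₗ f.toLinearMap := by
      apply b.ext
      intro x
      simp [f, hs, hs']
    exact LinearMap.congr_fun this v
  exact ⟨LinearEquiv.ofBijective (MonoidAlgebra.equivariantOfLinearOfComm f.toLinearMap hf)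
    f.bijective⟩

theorem exists_free_equiv {H : Type u} {Y : Type u} [Group H] [MulAction H Y]
    (hfree : ∀ (h : H) (y : Y), h • y = y → h = 1) :
    ∃ (O : Type u) (e : (Σ _ : O, H) ≃ Y), ∀ o h h', h • e ⟨o, h'⟩ = e ⟨o, h * h'⟩ := by
  refine ⟨MulAction.orbitRel.Quotient H Y,
    Equiv.ofBijective (fun x => x.2 • (Quotient.out x.1 : Y)) ⟨?_, ?_⟩, ?_⟩
  · rintro ⟨o, h⟩ ⟨o', h'⟩ heq
    simp only at heq
    have h0 : o = o' := by
      rw [← Quotient.out_eq o, ← Quotient.out_eq o']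
      apply Quotient.sound
      have : (h⁻¹ * h') • (Quotient.out o' : Y) = Quotient.out o := by
        rw [mul_smul, ← heq, inv_smul_smul]
      exact ⟨h⁻¹ * h', this⟩
    subst h0
    have : (h'⁻¹ * h) = 1 := hfree _ o.out (by rw [mul_smul, heq, inv_smul_smul])
    rw [inv_mul_eq_one.mp this]
  · intro y
    have : (Quotient.mk (MulAction.orbitRel H Y) y).out ∈ MulAction.orbit H y :=
      Quotient.exact (Quotient.out_eq (Quotient.mk (MulAction.orbitRel H Y) y))
    obtain ⟨h, hh⟩ := this
    refine ⟨⟨Quotient.mk _ y, h⁻¹⟩, ?_⟩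
    change h⁻¹ • (Quotient.mk (MulAction.orbitRel H Y) y).out = y
    rw [← hh]
    exact inv_smul_smul h y
  · intro o h h'
    exact smul_smul h h' _

open Module in
theorem freeBasis_smul {k : Type*} [Field k] {H O : Type*} [Group H] (o : O) (h h' : H) :
    MonoidAlgebra.single h (1 : k) • Finsupp.basis (fun _ : O => MonoidAlgebra.basis H k) ⟨o, h'⟩ =
      Finsupp.basis (fun _ : O => MonoidAlgebra.basis H k) ⟨o, h * h'⟩ := by
  simp [Finsupp.coe_basis]

/-- The action of `H_m` on the cosets. -/
abbrev cosetAct (m n : ℕ) : MulAction (H m)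
    (Monoid.CoprodI H ⧸ (Monoid.CoprodI.of : H n →* Monoid.CoprodI H).range) :=
  MulAction.compHom _ (Monoid.CoprodI.of : H m →* Monoid.CoprodI H)

instance resIndModuleBase (m n : ℕ) : Module k (ResInd k H m n) := inferInstanceAs (Module k (Ind k H n))

theorem resInd_single_smul (m n : ℕ) (h : H m) (c : k) (x : ResInd k H m n) :
   MonoidAlgebra.single h c • x = 
   (show ResInd k H m n from (MonoidAlgebra.single (Monoid.CoprodI.of h) c : FreeProdAlg k H) • (show Ind k H n from x)) := by
  change (show Ind k H n from inclHom k H m (MonoidAlgebra.single h c) • (show Ind k H n from x)) = _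
  rw [inclHom]
  simp

instance resIndTowerBase (m n : ℕ) : IsScalarTower k (MonoidAlgebra k (H m)) (ResInd k H m n) where
  smul_assoc c a x := by
    change (show Ind k H n from inclHom k H m (c • a) • (show Ind k H n from x)) =
      c • (inclHom k H m a • (show Ind k H n from x))
    rw [← smul_assoc]
    simp [inclHom]
/-- The cosets of the factor `H_n`. -/
abbrev Cosets (n : ℕ) : Type u :=
  Monoid.CoprodI H ⧸ (Monoid.CoprodI.of : H n →* Monoid.CoprodI H).range

/-- The `k`-linear map from `kG` to the permutation module. -/
def toCosets (n : ℕ) : FreeProdAlg k H →ₗ[k] (Cosets H n →₀ k) :=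
  (MonoidAlgebra.basis (Monoid.CoprodI H) k).constr k
    (fun g => Finsupp.single (QuotientGroup.mk g : Cosets H n) (1 : k))

theorem toCosets_single (n : ℕ) (g : Monoid.CoprodI H) (c : k) :
    toCosets k H n (MonoidAlgebra.single g c) =
      Finsupp.single (QuotientGroup.mk g : Cosets H n) c := by
  have h1 : (MonoidAlgebra.single g c : FreeProdAlg k H) =
      c • MonoidAlgebra.basis (Monoid.CoprodI H) k g := by simp
  rw [h1, map_smul, toCosets, Module.Basis.constr_basis]
  simp

/-- `kG ⊗ k → k[G/H_n]`. -/
def tensToCosets (n : ℕ) : FreeProdAlg k H ⊗[k] TrivMod k H n →ₗ[k] (Cosets H n →₀ k) :=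
  TensorProduct.lift ((LinearMap.lsmul k (Cosets H n →₀ k)).flip ∘ₗ toCosets k H n |>.compl₂
    (Representation.asModuleEquiv (Representation.trivial k (G := H n) (V := k))).toLinearMap)

theorem tensToCosets_tmul (n : ℕ) (a : FreeProdAlg k H) (v : TrivMod k H n) :
    tensToCosets k H n (a ⊗ₜ v) =
      (Representation.asModuleEquiv (Representation.trivial k (G := H n) (V := k)) v) •
        toCosets k H n a := by
  simp [tensToCosets]

theorem tensToCosets_rel (n : ℕ) (a : FreeProdAlg k H) (b : MonoidAlgebra k (H n))
    (v : TrivMod k H n) :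
    tensToCosets k H n ((a * inclHom k H n b) ⊗ₜ v) = tensToCosets k H n (a ⊗ₜ (b • v)) := by
  induction b using MonoidAlgebra.induction_linear with
  | zero => simp
  | add f g hf hg => simp only [map_add, mul_add, add_smul, TensorProduct.add_tmul,
      TensorProduct.tmul_add, hf, hg]
  | single h c =>
    induction a using MonoidAlgebra.induction_linear with
    | zero => rw [zero_mul, TensorProduct.zero_tmul, TensorProduct.zero_tmul]
    | add f g hf hg => simp only [map_add, add_mul, TensorProduct.add_tmul, hf, hg]
    | single g d =>
      have hq : (QuotientGroup.mk (g * Monoid.CoprodI.of h) : Cosets H n) = QuotientGroup.mk g := by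
        rw [QuotientGroup.eq]
        exact ⟨h⁻¹, by simp⟩
      rw [tensToCosets_tmul, tensToCosets_tmul, Representation.asModuleEquiv_map_smul, inclHom]
      simp only [MonoidAlgebra.mapDomainRingHom_apply, MonoidAlgebra.mapDomain_single,
        MonoidAlgebra.single_mul_single, toCosets_single, Representation.asAlgebraHom_single]
      rw [hq, LinearMap.smul_apply, Representation.trivial_apply, Finsupp.smul_single,
        Finsupp.smul_single, smul_eq_mul, smul_eq_mul, smul_eq_mul]
      congr 1
      ring

theorem tensToCosets_mem (n : ℕ) (x : FreeProdAlg k H ⊗[k] TrivMod k H n)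
    (hx : x ∈ indRel k H n) : tensToCosets k H n x = 0 := by
  have key : ∀ a : FreeProdAlg k H, tensToCosets k H n (a • x) = 0 := by
    induction hx using Submodule.span_induction with
    | mem x hx =>
      obtain ⟨a, b, v, rfl⟩ := hx
      intro c
      rw [smul_sub, TensorProduct.smul_tmul', TensorProduct.smul_tmul', smul_eq_mul, smul_eq_mul,
        ← mul_assoc, map_sub, tensToCosets_rel, sub_self]
    | zero => simp
    | add x y _ _ hx hy => intro a; rw [smul_add, map_add, hx, hy, add_zero]
    | smul c x _ hx => intro a; rw [← mul_smul, hx]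
  simpa using key 1

/-- `Ind_n → k[G/H_n]`. -/
def indToCosets (n : ℕ) : Ind k H n →ₗ[k] (Cosets H n →₀ k) where
  toFun := QuotientAddGroup.lift (indRel k H n).toAddSubgroup (tensToCosets k H n).toAddMonoidHom
    (fun x hx => tensToCosets_mem k H n x hx)
  map_add' x y := map_add _ x y
  map_smul' c x := by
    obtain ⟨x, rfl⟩ := Submodule.Quotient.mk_surjective _ x
    exact map_smul (tensToCosets k H n) c x

theorem indToCosets_mk (n : ℕ) (x) : indToCosets k H n (Submodule.Quotient.mk x) =
    tensToCosets k H n x := rfl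

/-- The unit of the trivial module. -/
def trivOne (n : ℕ) : TrivMod k H n :=
  (Representation.asModuleEquiv (Representation.trivial k (G := H n) (V := k))).symm 1

theorem single_smul_trivOne (n : ℕ) (h : H n) :
    (MonoidAlgebra.single h (1 : k)) • trivOne k H n = trivOne k H n := by
  rw [Representation.single_smul, one_smul]
  rfl

/-- The basis vectors of `Ind_n`. -/
def indVec (n : ℕ) : Cosets H n → Ind k H n :=
  Quotient.lift (fun g : Monoid.CoprodI H =>
    (Submodule.Quotient.mk ((MonoidAlgebra.single g (1 : k)) ⊗ₜ[k] trivOne k H n) : Ind k H n)) (by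
    intro g g' hg
    obtain ⟨h, hh⟩ := QuotientGroup.leftRel_apply.mp hg
    have hg' : g' = g * Monoid.CoprodI.of h := by rw [hh]; group
    symm
    apply (Submodule.Quotient.eq _).mpr
    apply Submodule.subset_span
    refine ⟨MonoidAlgebra.single g 1, MonoidAlgebra.single h 1, trivOne k H n, ?_⟩
    rw [single_smul_trivOne, inclHom]
    simp [hg'])

theorem indVec_mk (n : ℕ) (g : Monoid.CoprodI H) : indVec k H n (QuotientGroup.mk g) =
    Submodule.Quotient.mk ((MonoidAlgebra.single g (1 : k)) ⊗ₜ[k] trivOne k H n) := rfl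

/-- The linear equivalence `k[G/H_n] ≃ Ind_n`. -/
def indEquiv (n : ℕ) : Ind k H n ≃ₗ[k] (Cosets H n →₀ k) :=
  LinearEquiv.ofLinearMap (indToCosets k H n) (Finsupp.linearCombination k (indVec k H n))
    (by
      ext x : 2
      induction x using QuotientGroup.induction_on with
      | H g =>
      simp [indVec_mk, indToCosets_mk, tensToCosets_tmul, toCosets_single, trivOne])
    (by
      apply LinearMap.ext
      intro x
      obtain ⟨x, rfl⟩ := Submodule.Quotient.mk_surjective _ x
      rw [LinearMap.comp_apply, indToCosets_mk]
      induction x using TensorProduct.induction_on with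
      | zero => simp
      | add x y hx hy =>
        rw [map_add, map_add, hx, hy]; rfl
      | tmul a v =>
        induction a using MonoidAlgebra.induction_linear with
        | zero => simp
        | add f g hf hg =>
          rw [TensorProduct.add_tmul, map_add, map_add, hf, hg]; rfl
        | single g c =>
          rw [tensToCosets_tmul, toCosets_single, map_smul, Finsupp.linearCombination_single,
            indVec_mk, ← Submodule.Quotient.mk_smul, ← Submodule.Quotient.mk_smul]
          have hv : v = (Representation.asModuleEquiv
            (Representation.trivial k (G := H n) (V := k)) v) • trivOne k H n := by
            apply (Representation.asModuleEquiv
              (Representation.trivial k (G := H n) (V := k))).injective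
            simp [trivOne]
          conv_rhs => rw [hv]
          rw [LinearMap.id_apply, TensorProduct.tmul_smul, TensorProduct.smul_tmul']
          simp)

/-- The `k`-basis of `ResInd` indexed by cosets. -/
def resIndBasis (m n : ℕ) : Module.Basis (Cosets H n) k (ResInd k H m n) :=
  Module.Basis.ofRepr (indEquiv k H n)

theorem resIndBasis_apply (m n : ℕ) (x : Cosets H n) :
    resIndBasis k H m n x = indVec k H n x := by
  change (indEquiv k H n).symm (Finsupp.single x 1) = _
  simp [indEquiv]

theorem resIndBasis_smul (m n : ℕ) (h : H m) (x : Cosets H n) :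
    MonoidAlgebra.single h (1 : k) • resIndBasis k H m n x =
      resIndBasis k H m n ((Monoid.CoprodI.of h : Monoid.CoprodI H) • x) := by
  rw [resInd_single_smul, resIndBasis_apply, resIndBasis_apply]
  induction x using QuotientGroup.induction_on with
  | H g =>
  rw [MulAction.Quotient.smul_coe, indVec_mk, indVec_mk]
  change _ • Submodule.Quotient.mk _ = _
  rw [← Submodule.Quotient.mk_smul, TensorProduct.smul_tmul']
  simp

theorem resInd_free_of_ne_and_trivial_sum_free
    (p : ℕ) (hp : 0 < p) [CharP k p] :
    (∀ m n : ℕ, m ≠ n → Module.Free (MonoidAlgebra k (H m)) (ResInd k H m n)) ∧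
    (∀ n : ℕ, ∃ (F : Type u) (_ : AddCommGroup F) (_ : Module (MonoidAlgebra k (H n)) F),
      Module.Free (MonoidAlgebra k (H n)) F ∧
      Nonempty (ResInd k H n n ≃ₗ[MonoidAlgebra k (H n)] (TrivMod k H n × F))) := by
  have stab : ∀ (m n : ℕ) (h : H m) (g : Monoid.CoprodI H),
      (Monoid.CoprodI.of h : Monoid.CoprodI H) • (QuotientGroup.mk g : Cosets H n) =
        QuotientGroup.mk g → h ≠ 1 →
      m = n ∧ g ∈ (Monoid.CoprodI.of : H n →* Monoid.CoprodI H).range := by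
    intro m n h g hg hne
    rw [MulAction.Quotient.smul_coe, eq_comm, QuotientGroup.eq] at hg
    obtain ⟨h', hh⟩ := hg
    exact stab_aux H m n h h' hne g (by rw [hh]; simp)
  constructor
  · intro m n hmn
    letI := cosetAct H m n
    obtain ⟨O, e, he⟩ := exists_free_equiv (H := H m) (Y := Cosets H n) (by
      intro h y hy
      induction y using QuotientGroup.induction_on with
      | H g =>
      by_contra hne
      exact hmn (stab m n h g hy hne).1)
    obtain ⟨f⟩ := equivOfBases (Finsupp.basis (fun _ : O => MonoidAlgebra.basis (H m) k))
      (resIndBasis k H m n) e (fun h x => ⟨x.1, h * x.2⟩)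
      (fun h x => freeBasis_smul x.1 h x.2) (by
        rintro h ⟨o, h'⟩
        rw [resIndBasis_smul, ← he]
        rfl)
    exact Module.Free.of_equiv f
  · intro n
    letI := cosetAct H n n
    let x0 : Cosets H n := QuotientGroup.mk 1
    have hx0 : ∀ h : H n, h • x0 = x0 := by
      intro h
      change (Monoid.CoprodI.of h : Monoid.CoprodI H) • x0 = x0
      rw [MulAction.Quotient.smul_coe, eq_comm, QuotientGroup.eq]
      exact ⟨h, by simp⟩
    let Y : SubMulAction (H n) (Cosets H n) :=
      { carrier := {x | x ≠ x0}
        smul_mem' := by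
          intro h x hx hxx
          exact hx (smul_left_cancel h (hxx.trans (hx0 h).symm)) }
    obtain ⟨O, e, he⟩ := exists_free_equiv (H := H n) (Y := Y) (by
      rintro h ⟨y, hy⟩ hyy
      have hyy' : h • y = y := congrArg Subtype.val hyy
      induction y using QuotientGroup.induction_on with
      | H g =>
      by_contra hne
      apply hy
      have := (stab n n h g hyy' hne).2
      exact (QuotientGroup.eq.mpr (by simpa using this)).symm)
    let e' : Unit ⊕ (Σ _ : O, H n) ≃ Cosets H n :=
      Equiv.ofBijective (Sum.elim (fun _ => x0) (fun z => (e z : Cosets H n))) (by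
        constructor
        · rintro (a | a) (b | b) hab
          · rfl
          · exact absurd hab.symm (e b).2
          · exact absurd hab (e a).2
          · exact congrArg Sum.inr (e.injective (Subtype.ext hab))
        · intro x
          by_cases hx : x = x0
          · exact ⟨Sum.inl (), hx.symm⟩
          · exact ⟨Sum.inr (e.symm ⟨x, hx⟩), by simp⟩)
    let bT : Module.Basis Unit k (TrivMod k H n) := (Module.Basis.singleton Unit k).map
      (Representation.asModuleEquiv (Representation.trivial k (G := H n) (V := k))).symm
    have hbT : ∀ i, bT i = trivOne k H n := by
      intro i
      simp [bT, trivOne]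
    refine ⟨O →₀ MonoidAlgebra k (H n), inferInstance, inferInstance, inferInstance, ?_⟩
    obtain ⟨f⟩ := equivOfBases
      (bT.prod (Finsupp.basis (fun _ : O => MonoidAlgebra.basis (H n) k)))
      (resIndBasis k H n n) e' (fun h => Sum.map id (fun x => ⟨x.1, h * x.2⟩)) (by
        rintro h (x | ⟨o, h'⟩)
        · ext1
          · change _ • (bT.prod _ (Sum.inl x)).1 = (bT.prod _ (Sum.inl x)).1
            rw [Module.Basis.prod_apply_inl_fst, hbT, single_smul_trivOne]
          · simp
        · ext1
          · simp
          · simpa using freeBasis_smul o h h') (by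
        rintro h (x | ⟨o, h'⟩)
        · rw [resIndBasis_smul]
          exact congrArg _ (hx0 h)
        · rw [resIndBasis_smul]
          exact congrArg _ (congrArg Subtype.val (he o h h')))
    exact ⟨f.symm⟩
end
end

section
/- Let p be a prime, k a field of characteristic p, and H a cyclic group of order p. Let M be a finite-dimensional k-linear representation of H that is not projective as a kH-module, let M^∨ be its dual representation, and let η : k → M ⊗ M^∨ be the coevaluation morphism of representations (sending 1 to the identity element of M ⊗ M^∨ ≅ End_k(M)). Then η is a split monomorphism in the stable module category: there exists a morphism of representations r : M ⊗ M^∨ → k such that the endomorphism id_k − r ∘ η of the trivial representation factors through a projective kH-module. -/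
open TensorProduct

noncomputable section

universe u

/-- The coevaluation element of a finite-dimensional vector space `M`: the element of
`M ⊗ M^∨` corresponding to the identity endomorphism under `M ⊗ M^∨ ≅ End_k M`. -/
def coevElem (k M : Type*) [Field k] [AddCommGroup M] [Module k M] [FiniteDimensional k M] :
    M ⊗[k] Module.Dual k M :=
  TensorProduct.comm k (Module.Dual k M) M ((dualTensorHomEquiv k M M).symm LinearMap.id)

/-- The coevaluation morphism `η : k ⟶ M ⊗ M^∨`, sending `1` to the identity element of
`M ⊗ M^∨ ≅ End_k M`. -/
def coevMap (k M : Type*) [Field k] [AddCommGroup M] [Module k M] [FiniteDimensional k M] :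
    k →ₗ[k] M ⊗[k] Module.Dual k M :=
  LinearMap.toSpanSingleton k _ (coevElem k M)

theorem aux_natsum {p : ℕ} (hp : p.Prime) (k : Type*) [Field k] [CharP k p] (m : ℕ)
    (hm : m ≤ p - 1) :
    ∑ i ∈ Finset.range p, ((i : k)) ^ m = if m = p - 1 then -1 else 0 := by
  have := Fact.mk hp
  have h1 : ∑ i ∈ Finset.range p, ((i : ZMod p)) ^ m = ∑ x : ZMod p, x ^ m := by
    refine Finset.sum_bij (fun i _ => (i : ZMod p)) (by simp) ?_ ?_ (by simp)
    · intro a ha b hb hab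
      rw [Finset.mem_range] at ha hb
      have := congrArg ZMod.val hab
      simpa [ZMod.val_natCast, Nat.mod_eq_of_lt ha, Nat.mod_eq_of_lt hb] using this
    · intro b _
      exact ⟨b.val, by simpa using ZMod.val_lt b, by simp⟩
  have h2 : ∑ x : ZMod p, x ^ m = if m = p - 1 then -1 else 0 := by
    split_ifs with h
    · subst h
      have hp1 : p - 1 ≠ 0 := by have := hp.two_le; omega
      rw [← Finset.sum_erase_add _ _ (Finset.mem_univ (0 : ZMod p)), zero_pow hp1, add_zero]
      rw [Finset.sum_congr rfl (g := fun _ => (1 : ZMod p))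
        (fun x hx => ZMod.pow_card_sub_one_eq_one (Finset.ne_of_mem_erase hx))]
      simp [Finset.card_erase_of_mem, ZMod.card, Nat.cast_sub hp.one_le]
    · apply FiniteField.sum_pow_lt_card_sub_one
      rw [ZMod.card]; omega
  have h3 := congrArg (ZMod.castHom (dvd_refl p) k) (h1.trans h2)
  rw [map_sum] at h3
  simp only [map_pow, map_natCast] at h3
  rw [h3]
  split_ifs <;> simp

theorem aux_algsum {p : ℕ} (hp : p.Prime) (k : Type*) [Field k] [CharP k p]
    {E : Type*} [Ring E] [Algebra k E] (φ : E) :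
    ∑ i ∈ Finset.range p, (φ + (i : E)) ^ (p - 1) = -1 := by
  have h : ∀ i ∈ Finset.range p, (φ + (i : E)) ^ (p - 1) =
      ∑ m ∈ Finset.range (p - 1 + 1),
        φ ^ m * algebraMap k E ((i : k) ^ (p - 1 - m)) * ((p - 1).choose m : E) := by
    intro i _
    rw [(Nat.cast_commute i φ).symm.add_pow]
    simp
  rw [Finset.sum_congr rfl h, Finset.sum_comm]
  simp only [← Finset.sum_mul, ← Finset.mul_sum, ← map_sum]
  rw [Finset.sum_eq_single 0]
  · rw [aux_natsum hp k _ (by omega)]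
    simp
  · intro b hb hb0
    rw [Finset.mem_range] at hb
    rw [aux_natsum hp k _ (by omega), if_neg (by omega)]
    simp
  · simp

/-- Higman's criterion (one direction). -/
theorem aux_higman {k H M : Type*} [Field k] [Group H] [Fintype H] [AddCommGroup M] [Module k M]
    (ρ : Representation k H M) (ψ : M →ₗ[k] M)
    (h : ∀ v, ∑ g : H, ρ g⁻¹ (ψ (ρ g v)) = v) :
    Module.Projective (MonoidAlgebra k H) ρ.asModule := by
  let F := ρ.asModule →₀ MonoidAlgebra k H
  let f : F →ₗ[MonoidAlgebra k H] ρ.asModule := Finsupp.linearCombination _ id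
  have hf : Function.Surjective f := Finsupp.linearCombination_id_surjective _ _
  obtain ⟨s, hs⟩ := (f.restrictScalars k).exists_rightInverse_of_surjective
    (LinearMap.range_eq_top.2 hf)
  let ψ' : ρ.asModule →ₗ[k] ρ.asModule :=
    ρ.asModuleEquiv.symm.toLinearMap ∘ₗ ψ ∘ₗ ρ.asModuleEquiv.toLinearMap
  refine Module.Projective.of_split ((s ∘ₗ ψ').sumOfConjugatesEquivariant H) f ?_
  ext v
  have hs' : ∀ x, f (s x) = x := fun x => LinearMap.congr_fun hs x
  rw [LinearMap.comp_apply, LinearMap.sumOfConjugatesEquivariant_apply, map_sum]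
  simp only [LinearMap.conjugate_apply, map_smul, LinearMap.comp_apply, hs', LinearMap.id_apply]
  apply ρ.asModuleEquiv.injective
  rw [map_sum]
  refine Eq.trans (Finset.sum_congr rfl fun g _ => ?_) (h (ρ.asModuleEquiv v))
  rw [Representation.asModuleEquiv_map_smul]
  simp [ψ']
  rfl

theorem aux_proj {p : ℕ} (hp : p.Prime) {k H M : Type*} [Field k] [CharP k p] [Group H]
    (hcard : Nat.card H = p) [AddCommGroup M] [Module k M]
    (ρ : Representation k H M) (g : H) (hg : ∀ x, x ∈ Subgroup.zpowers g) (φ : Module.End k M)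
    (h : φ * ρ g = ρ g * (φ + 1)) :
    Module.Projective (MonoidAlgebra k H) ρ.asModule := by
  classical
  have : Finite H := Nat.finite_of_card_ne_zero (by rw [hcard]; exact hp.ne_zero)
  have := Fintype.ofFinite H
  have hi : ∀ i : ℕ, φ * ρ (g ^ i) = ρ (g ^ i) * (φ + (i : Module.End k M)) := by
    intro i
    induction i with
    | zero => simp
    | succ n ih =>
      rw [pow_succ, map_mul, ← mul_assoc, ih, mul_assoc, mul_assoc, add_mul, h,
        (Nat.cast_commute n (ρ g)).eq, ← mul_add]
      push_cast
      congr 2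
      abel
  have hi' : ∀ i n : ℕ, φ ^ n * ρ (g ^ i) = ρ (g ^ i) * (φ + (i : Module.End k M)) ^ n := by
    intro i n
    have : SemiconjBy (ρ (g ^ i)) (φ + (i : Module.End k M)) φ := (hi i).symm
    exact (this.pow_right n).symm
  have ho : orderOf g = p := by rw [orderOf_eq_card_of_forall_mem_zpowers hg, hcard]
  have key : ∑ x : H, ρ x⁻¹ * (-(φ ^ (p - 1)) * ρ x) = 1 := by
    rw [← IsCyclic.image_range_orderOf hg, Finset.sum_image, ho]
    · rw [← neg_neg (1 : Module.End k M), ← aux_algsum hp k φ, ← Finset.sum_neg_distrib]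
      refine Finset.sum_congr rfl fun i _ => ?_
      rw [neg_mul, hi', mul_neg, ← mul_assoc, ← map_mul]
      simp
    · intro a ha b hb hab
      exact pow_injOn_Iio_orderOf (by simpa using ha) (by simpa using hb) hab
  refine aux_higman ρ (-(φ ^ (p - 1))) fun v => ?_
  have := LinearMap.congr_fun key v
  rw [LinearMap.sum_apply] at this
  exact this

/-- Let `p` be a prime, `k` a field of characteristic `p` and `H` a cyclic group of order `p`.
Let `M` be a finite-dimensional representation of `H` over `k` which is not projective as a
`kH`-module, and let `η : k → M ⊗ M^∨` be the coevaluation.  Then `η` is a split monomorphism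
in the stable module category: there is a morphism of representations `r : M ⊗ M^∨ → k` such
that `id_k - r ∘ η` factors through a projective `kH`-module. -/
theorem coevaluation_stably_split_mono_of_not_projective
    (p : ℕ) (hp : p.Prime) (k : Type u) [Field k] [CharP k p]
    (H : Type u) [Group H] (hcyc : IsCyclic H) (hcard : Nat.card H = p)
    (M : Type u) [AddCommGroup M] [Module k M] [FiniteDimensional k M]
    (ρ : Representation k H M)
    (hproj : ¬ Module.Projective (MonoidAlgebra k H) ρ.asModule) :
    ∃ r : M ⊗[k] Module.Dual k M →ₗ[k] k,
      (∀ g : H, r ∘ₗ (ρ.tprod ρ.dual) g = r) ∧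
      ∃ (P : Type u) (_ : AddCommGroup P) (_ : Module k P) (σ : Representation k H P),
        Module.Projective (MonoidAlgebra k H) σ.asModule ∧
        ∃ (a : k →ₗ[k] P) (b : P →ₗ[k] k),
          (∀ g : H, σ g ∘ₗ a = a) ∧ (∀ g : H, b ∘ₗ σ g = b) ∧
          b ∘ₗ a = LinearMap.id - r ∘ₗ coevMap k M := by
  classical
  obtain ⟨g, hg⟩ := hcyc.exists_generator
  by_cases hmem : coevElem k M ∈ LinearMap.range ((ρ.tprod ρ.dual) g - 1)
  · exfalso
    apply hproj
    obtain ⟨x, hx⟩ := hmem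
    let e := TensorProduct.comm k M (Module.Dual k M)
    let θ : Module.End k M := dualTensorHom k M M (e x)
    have hc := LinearMap.congr_fun (Representation.dualTensorHom_comm ρ ρ g) (e x)
    have he : e ((ρ.tprod ρ.dual) g x) = TensorProduct.map (ρ.dual g) (ρ g) (e x) := by
      have : e.toLinearMap ∘ₗ TensorProduct.map (ρ g) (ρ.dual g) =
          TensorProduct.map (ρ.dual g) (ρ g) ∘ₗ e.toLinearMap := by
        ext <;> simp [e]
      exact LinearMap.congr_fun this x
    have h1 : dualTensorHom k M M (e (coevElem k M)) = LinearMap.id := by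
      have : e (coevElem k M) = (dualTensorHomEquiv k M M).symm LinearMap.id := by
        simp only [e, coevElem]
        exact (TensorProduct.comm k (Module.Dual k M) M).symm_apply_apply _
      rw [this]
      exact (dualTensorHomEquiv k M M).apply_symm_apply _
    have h2 : ρ g * θ * ρ g⁻¹ - θ = 1 := by
      rw [← hx, LinearMap.sub_apply, map_sub, map_sub, he] at h1
      rw [LinearMap.comp_apply, LinearMap.comp_apply] at hc
      rw [hc] at h1
      exact h1
    have hgg : ρ g⁻¹ * ρ g = 1 := by rw [← map_mul]; simp
    refine aux_proj hp hcard ρ g hg (-θ) ?_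
    have h3 : ρ g * θ - θ * ρ g = ρ g := by
      have := congrArg (· * ρ g) h2
      simpa [sub_mul, mul_assoc, hgg] using this
    rw [mul_add, mul_neg, mul_one, neg_mul]
    nth_rewrite 3 [← h3]
    abel
  · obtain ⟨f, hf, hle⟩ := Submodule.exists_le_ker_of_notMem hmem
    have hfg : f ∘ₗ (ρ.tprod ρ.dual) g = f := by
      refine LinearMap.ext fun x => ?_
      have := hle ⟨x, rfl⟩
      rw [LinearMap.mem_ker, LinearMap.sub_apply, map_sub, sub_eq_zero] at this
      exact this
    have hall : ∀ x : H, f ∘ₗ (ρ.tprod ρ.dual) x = f := by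
      have : Finite H := Nat.finite_of_card_ne_zero (by rw [hcard]; exact hp.ne_zero)
      intro x
      obtain ⟨n, rfl⟩ := (mem_powers_iff_mem_zpowers).2 (hg x)
      show f ∘ₗ (ρ.tprod ρ.dual) (g ^ n) = f
      induction n with
      | zero => rw [pow_zero, map_one]; rfl
      | succ n ih =>
        rw [pow_succ, map_mul, Module.End.mul_eq_comp, ← LinearMap.comp_assoc, ih, hfg]
    refine ⟨(f (coevElem k M))⁻¹ • f, fun x => ?_, PUnit, inferInstance, inferInstance, 1,
      ?_, 0, 0, by simp, by simp, ?_⟩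
    · rw [LinearMap.smul_comp, hall]
    · have : Subsingleton (Representation.asModule (1 : Representation k H PUnit.{u+1})) :=
        inferInstanceAs (Subsingleton PUnit)
      infer_instance
    · ext
      simp [coevMap, hf]
end
end
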